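/- arXiv:1012.0995 — 8 statements merged into one kernel-verified Lean document; each statement's English description precedes it below -/
import Mathlib

section
/- (Theorem 1(i).) Let k ≥ 1 and n = 2k+1. Let u be a π-class of weight-k binary n-strings and w a π-class of weight-(k+1) binary n-strings, and suppose there exist representatives s ∈ u and c ∈ w with support(s) ⊊ support(c) (i.e., u and w are adjacent in the quotient graph M_k/π). Then the π-class of ℵ(c) (a class of weight-k strings) and the π-class of ℵ(s) (a class of weight-(k+1) strings) likewise contain representatives s′, c′ with support(s′) ⊊ support(c′); that is, every skew edge of M_k/π is accompanied by the reflected skew edge joining ℵ_π^{-1}(w) to ℵ_π(u). -/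
/-!
Complemented reversal `ℵ` conjugates each rotation to its inverse (`aleph_rot`), so it maps orbits
to orbits, and it reverses strict inclusion of supports (`supp_aleph_ssubset`). Hence if
`supp s₀ ⊂ supp c₀` witnesses the edge `uw`, the strings `ℵ c₀` and `ℵ s₀` witness the reflected
edge.
-/

/-- The support of a binary `(2k+1)`-string. -/
def supp (k : ℕ) (s : ZMod (2*k+1) → Bool) : Finset (ZMod (2*k+1)) :=
  Finset.univ.filter fun i => s i = true

/-- The weight of a binary `(2k+1)`-string. -/
def wt (k : ℕ) (s : ZMod (2*k+1) → Bool) : ℕ := (supp k s).card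

/-- The complemented reversal `ℵ`: `ℵ(s)(i) = ¬ s(2k − i)`. -/
def aleph (k : ℕ) (s : ZMod (2*k+1) → Bool) : ZMod (2*k+1) → Bool :=
  fun i => !(s (((2*k : ℕ) : ZMod (2*k+1)) - i))

/-- The rotation `σ_t`: `(σ_t s)(i) = s(i − t)`. -/
def rot (k : ℕ) (t : ZMod (2*k+1)) (s : ZMod (2*k+1) → Bool) : ZMod (2*k+1) → Bool :=
  fun i => s (i - t)

/-- The `π`-class (rotation orbit) of a binary string. -/
def orbit (k : ℕ) (s : ZMod (2*k+1) → Bool) : Set (ZMod (2*k+1) → Bool) :=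
  {c | ∃ t : ZMod (2*k+1), c = rot k t s}

/-- Conjugating by complemented reversal inverts a rotation; hence `ℵ` descends to `π`-classes. -/
theorem aleph_rot (k : ℕ) (t : ZMod (2*k+1)) (s : ZMod (2*k+1) → Bool) :
    aleph k (rot k t s) = rot k (-t) (aleph k s) := by
  funext i
  simp only [aleph, rot]
  congr 2
  ring

theorem mem_supp_aleph (k : ℕ) (s : ZMod (2*k+1) → Bool) (i : ZMod (2*k+1)) :
    i ∈ supp k (aleph k s) ↔ ((2*k : ℕ) : ZMod (2*k+1)) - i ∉ supp k s := by
  simp [supp, aleph]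

/-- Complementation reverses inclusion of supports, and the reflection `i ↦ 2k - i` preserves it. -/
theorem supp_aleph_ssubset (k : ℕ) {s c : ZMod (2*k+1) → Bool} (h : supp k s ⊂ supp k c) :
    supp k (aleph k c) ⊂ supp k (aleph k s) := by
  obtain ⟨x, hxc, hxs⟩ := Finset.exists_of_ssubset h
  refine (Finset.ssubset_iff_of_subset fun i hi => ?_).mpr
    ⟨((2*k : ℕ) : ZMod (2*k+1)) - x, ?_, ?_⟩
  · rw [mem_supp_aleph] at hi ⊢
    exact fun hs => hi (h.subset hs)
  · rwa [mem_supp_aleph, sub_sub_cancel]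
  · rwa [mem_supp_aleph, sub_sub_cancel, not_not]

/-- Theorem 1(i): every skew edge of `M_k/π` is accompanied by the reflected
skew edge joining `ℵ_π^{-1}(w)` to `ℵ_π(u)`. -/
theorem stmt2 (k : ℕ) (hk : 1 ≤ k)
    (u w : Set (ZMod (2*k+1) → Bool)) (s c : ZMod (2*k+1) → Bool)
    (hsk : wt k s = k) (hck : wt k c = k + 1)
    (hu : u = orbit k s) (hw : w = orbit k c)
    (h : ∃ s₀ ∈ u, ∃ c₀ ∈ w, supp k s₀ ⊂ supp k c₀) :
    ∃ s' ∈ orbit k (aleph k c), ∃ c' ∈ orbit k (aleph k s),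
      supp k s' ⊂ supp k c' := by
  subst hu hw
  obtain ⟨_, ⟨a, rfl⟩, _, ⟨b, rfl⟩, hsc⟩ := h
  exact ⟨_, ⟨-b, aleph_rot k b c⟩, _, ⟨-a, aleph_rot k a s⟩, supp_aleph_ssubset k hsc⟩
end

section
/- (Theorem 1(ii): horizontal edges have multiplicity at most 2.) Let k ≥ 1 and n = 2k+1. For every binary n-string s of weight k, the number of t ∈ ZMod n such that the rotation σ_t s is antipalindromic is at most 2. -/
/-- `c` is a center of `s` if the reflection about `c` sends the support of `s` off itself. -/
def IsCenter (k : ℕ) (s : ZMod (2*k+1) → Bool) (c : ZMod (2*k+1)) : Prop :=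
  ∀ x, s x = true → s (c + c - x) = false

lemma zmod_add_self_inj (k : ℕ) {a b : ZMod (2*k+1)} (h : a + a = b + b) : a = b := by
  have h0 : (2 * (k : ZMod (2*k+1)) + 1) = 0 := by
    have := ZMod.natCast_self (2*k+1)
    push_cast at this
    exact this
  linear_combination (a - b) * h0 - (k : ZMod (2*k+1)) * h

lemma IsCenter.apply_self {k : ℕ} {s : ZMod (2*k+1) → Bool} {c : ZMod (2*k+1)}
    (h : IsCenter k s c) : s c = false := by
  by_contra hc
  have := h c (by simpa using hc)
  rw [add_sub_cancel_right] at this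
  exact hc this

/-- In weight `k`, the support, its reflection about a center `c` and `{c}` have total size
`2k + 1`, so they cover everything. -/
lemma IsCenter.apply_reflect {k : ℕ} {s : ZMod (2*k+1) → Bool} (hs : wt k s = k)
    {c : ZMod (2*k+1)} (h : IsCenter k s c) {x : ZMod (2*k+1)} (hx : s x = false) (hxc : x ≠ c) :
    s (c + c - x) = true := by
  have hinj : Function.Injective fun y : ZMod (2*k+1) => c + c - y := sub_right_injective
  have hdisj : Disjoint (supp k s) ((supp k s).image fun y => c + c - y) := by
    rw [Finset.disjoint_left]
    intro y hy hy'
    obtain ⟨z, hz, rfl⟩ := Finset.mem_image.1 hy'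
    simp only [supp, Finset.mem_filter, Finset.mem_univ, true_and] at hy hz
    simp [h z hz] at hy
  have hc : c ∉ supp k s ∪ (supp k s).image fun y => c + c - y := by
    simp only [supp, Finset.mem_union, Finset.mem_image, Finset.mem_filter, Finset.mem_univ,
      true_and, h.apply_self]
    rintro (h1 | ⟨y, hy, hyc⟩)
    · simp at h1
    · have : y = c := by linear_combination -hyc
      rw [this, h.apply_self] at hy
      simp at hy
  have hcard : (insert c (supp k s ∪ (supp k s).image fun y => c + c - y)).card
      = Fintype.card (ZMod (2*k+1)) := by
    have hs' : (supp k s).card = k := hs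
    rw [Finset.card_insert_of_notMem hc, Finset.card_union_of_disjoint hdisj,
      Finset.card_image_of_injective _ hinj, hs', ZMod.card]
    ring
  have hmem := Finset.mem_univ x
  rw [← (Finset.card_eq_iff_eq_univ _).1 hcard] at hmem
  simp only [supp, Finset.mem_insert, Finset.mem_union, Finset.mem_image, Finset.mem_filter,
    Finset.mem_univ, true_and, hx] at hmem
  rcases hmem with h1 | h1 | ⟨y, hy, rfl⟩
  · exact absurd h1 hxc
  · simp at h1
  · simpa using hy

/-- The translation by `2a - 2b`, a product of two reflections, keeps the value `false` away
from `b`. -/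
lemma IsCenter.apply_translate {k : ℕ} {s : ZMod (2*k+1) → Bool} (hs : wt k s = k)
    {a b x : ZMod (2*k+1)} (ha : IsCenter k s a) (hb : IsCenter k s b) (hx : s x = false)
    (hxb : x ≠ b) : s (a + a - (b + b - x)) = false :=
  ha _ (hb.apply_reflect hs hx hxb)

lemma not_three_centers {k : ℕ} {s : ZMod (2*k+1) → Bool} (hs : wt k s = k)
    {a b c : ZMod (2*k+1)} (ha : IsCenter k s a) (hb : IsCenter k s b) (hc : IsCenter k s c)
    (hab : a ≠ b) (hac : a ≠ c) (hbc : b ≠ c) : False := by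
  have h1 := ha.apply_translate hs hb hc.apply_self hbc.symm
  have h2 := hb.apply_translate hs ha hc.apply_self hac.symm
  have hne : a + a - (b + b - c) ≠ c := fun h =>
    hab (zmod_add_self_inj k (by linear_combination h))
  have h3 := hc.apply_reflect hs h1 hne
  rw [show c + c - (a + a - (b + b - c)) = b + b - (a + a - c) by ring, h2] at h3
  simp at h3

lemma isCenter_of_rot {k : ℕ} {s : ZMod (2*k+1) → Bool} {t : ZMod (2*k+1)}
    (h : supp k (rot k t s) ⊆ supp k (aleph k (rot k t s))) : IsCenter k s (k - t) := by
  intro x hx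
  have hmem : x + t ∈ supp k (rot k t s) :=
    Finset.mem_filter.2 ⟨Finset.mem_univ _, by simpa [rot] using hx⟩
  have := h hmem
  simp only [supp, aleph, rot, Finset.mem_filter, Finset.mem_univ, true_and,
    Bool.not_eq_true'] at this
  rw [← this]
  congr 1
  push_cast
  ring

/-- Theorem 1(ii): for every weight-`k` binary `(2k+1)`-string `s`, at most two
rotations of `s` are antipalindromic; hence horizontal edges of `M_k/π` have
multiplicity at most `2`. -/
theorem stmt3 (k : ℕ) (hk : 1 ≤ k) (s : ZMod (2*k+1) → Bool) (hs : wt k s = k) :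
    (Finset.univ.filter fun t : ZMod (2*k+1) =>
      supp k (rot k t s) ⊆ supp k (aleph k (rot k t s))).card ≤ 2 := by
  by_contra! hcon
  obtain ⟨t, ht, u, hu, v, hv, htu, htv, huv⟩ := Finset.two_lt_card.1 hcon
  simp only [Finset.mem_filter, Finset.mem_univ, true_and] at ht hu hv
  exact not_three_centers hs (isCenter_of_rot ht) (isCenter_of_rot hu) (isCenter_of_rot hv)
    (sub_right_injective.ne htu) (sub_right_injective.ne htv) (sub_right_injective.ne huv)
end

section
/- (Part of Theorem 5.) Let k ≥ 1 and n = 2k+1. The number of π-classes (rotation orbits) of weight-k binary n-strings equals the k-th Catalan number, catalan(k) = (1/(2k+1))·C(2k+1, k); equivalently, (2k+1) · catalan(k) = C(2k+1, k), and the number of orbits equals catalan(k). (This number is the cardinality of the vertex set of the reduced graph R_k.) -/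
theorem mem_supp (k : ℕ) (s : ZMod (2*k+1) → Bool) (i : ZMod (2*k+1)) :
    i ∈ supp k s ↔ s i = true := by
  simp [supp]

theorem supp_rot (k : ℕ) (t : ZMod (2*k+1)) (s : ZMod (2*k+1) → Bool) :
    supp k (rot k t s) = (supp k s).map (addRightEmbedding t) := by
  ext i
  simp only [mem_supp, Finset.mem_map, addRightEmbedding_apply, rot]
  constructor
  · intro h
    exact ⟨i - t, h, by simp⟩
  · rintro ⟨j, hj, rfl⟩
    simpa using hj

theorem wt_rot (k : ℕ) (t : ZMod (2*k+1)) (s : ZMod (2*k+1) → Bool) :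
    wt k (rot k t s) = wt k s := by
  simp [wt, supp_rot]

theorem rot_rot (k : ℕ) (t u : ZMod (2*k+1)) (s : ZMod (2*k+1) → Bool) :
    rot k t (rot k u s) = rot k (t + u) s := by
  funext i
  simp only [rot]
  congr 1
  ring

theorem rot_zero (k : ℕ) (s : ZMod (2*k+1) → Bool) : rot k 0 s = s := by
  funext i
  simp [rot]

/-- The rotation action is free on the strings of weight `k`. -/
theorem eq_zero_of_rot_eq_self (k : ℕ) (t : ZMod (2*k+1)) (s : ZMod (2*k+1) → Bool)
    (hs : wt k s = k) (h : rot k t s = s) : t = 0 := by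
  have h1 : ∑ i ∈ supp k s, i = ∑ i ∈ supp k s, (i + t) := by
    conv_lhs => rw [← h, supp_rot, Finset.sum_map]
    rfl
  have h2 : (k : ZMod (2*k+1)) * t = 0 := by
    rw [Finset.sum_add_distrib, Finset.sum_const, nsmul_eq_mul] at h1
    have hc : (supp k s).card = k := hs
    rw [hc] at h1
    exact left_eq_add.mp h1
  have h3 : (2 * (k : ZMod (2*k+1)) + 1) = 0 := by
    exact_mod_cast ZMod.natCast_self (2*k+1)
  linear_combination t * h3 - 2 * h2

theorem rot_injective (k : ℕ) (s : ZMod (2*k+1) → Bool) (hs : wt k s = k) :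
    Function.Injective fun t => rot k t s := by
  intro t u h
  have h' : rot k (-u + t) s = s := by
    rw [← rot_rot, show rot k t s = rot k u s from h, rot_rot, neg_add_cancel, rot_zero]
  have := eq_zero_of_rot_eq_self k _ s hs h'
  linear_combination this

theorem orbit_eq_iff (k : ℕ) (s c : ZMod (2*k+1) → Bool) :
    orbit k c = orbit k s ↔ ∃ t, rot k t s = c := by
  constructor
  · intro h
    have hc : c ∈ orbit k s := h ▸ ⟨0, (rot_zero k c).symm⟩
    obtain ⟨t, ht⟩ := hc
    exact ⟨t, ht.symm⟩
  · rintro ⟨t, rfl⟩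
    ext d
    constructor
    · rintro ⟨u, rfl⟩
      exact ⟨u + t, rot_rot ..⟩
    · rintro ⟨u, rfl⟩
      exact ⟨u - t, by rw [rot_rot, sub_add_cancel]⟩

/-- The strings of weight `k` correspond to their supports, the `k`-subsets of `ZMod (2k+1)`. -/
theorem card_weight (k : ℕ) :
    (Finset.univ.filter fun s : ZMod (2*k+1) → Bool => wt k s = k).card
      = (2*k+1).choose k := by
  have h : (Finset.powersetCard k (Finset.univ : Finset (ZMod (2*k+1)))).card
      = (2*k+1).choose k := by
    rw [Finset.card_powersetCard, Finset.card_univ, ZMod.card]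
  rw [← h]
  refine Finset.card_bij' (fun s _ => supp k s) (fun A _ i => decide (i ∈ A)) ?_ ?_ ?_ ?_
  · intro s hs
    exact Finset.mem_powersetCard.mpr ⟨Finset.subset_univ _, (Finset.mem_filter.mp hs).2⟩
  · intro A hA
    refine Finset.mem_filter.mpr ⟨Finset.mem_univ _, ?_⟩
    simpa [Finset.mem_powersetCard, wt, supp] using hA
  · intro s _
    funext i
    simp [supp]
  · intro A _
    ext i
    simp [supp]

/-- The fibre of `orbit k` through a string of weight `k`, that is, its orbit, has `2k+1`
elements. -/
theorem card_fiber (k : ℕ) (s : ZMod (2*k+1) → Bool) (hs : wt k s = k) :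
    {c | wt k c = k ∧ orbit k c = orbit k s}.ncard = 2*k+1 := by
  have h : {c | wt k c = k ∧ orbit k c = orbit k s} = Set.range fun t => rot k t s := by
    ext c
    rw [Set.mem_ofPred_eq, orbit_eq_iff, Set.mem_range]
    constructor
    · exact fun h => h.2
    · rintro ⟨t, rfl⟩
      exact ⟨(wt_rot k t s).trans hs, t, rfl⟩
  rw [h, ← Set.image_univ, Set.ncard_image_of_injective _ (rot_injective k s hs),
    Set.ncard_univ, Nat.card_zmod]

theorem mul_catalan_eq_choose (k : ℕ) : (2*k+1) * catalan k = (2*k+1).choose k := by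
  have h1 := succ_mul_catalan_eq_centralBinom k
  rw [Nat.centralBinom_eq_two_mul_choose] at h1
  have h2 := Nat.add_one_mul_choose_eq (2*k) k
  have h3 : (2*k+1).choose (k+1) = (2*k+1).choose k := Nat.choose_symm_half k
  rw [h3, ← h1] at h2
  apply Nat.eq_of_mul_eq_mul_right (Nat.succ_pos k)
  rw [Nat.succ_eq_add_one, ← h2]
  ring

/-- Part of Theorem 5: the number of `π`-classes of weight-`k` binary
`(2k+1)`-strings (the vertices of the reduced graph `R_k`) is the `k`-th
Catalan number `(1/(2k+1))·C(2k+1,k)`. -/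
theorem stmt5 (k : ℕ) (hk : 1 ≤ k) :
    {C : Set (ZMod (2*k+1) → Bool) | ∃ s, wt k s = k ∧ C = orbit k s}.ncard
      = catalan k ∧
    (2*k+1) * catalan k = Nat.choose (2*k+1) k := by
  classical
  refine ⟨?_, mul_catalan_eq_choose k⟩
  set W := Finset.univ.filter fun s : ZMod (2*k+1) → Bool => wt k s = k with hW
  have hset : {C : Set (ZMod (2*k+1) → Bool) | ∃ s, wt k s = k ∧ C = orbit k s}
      = ((W.image (orbit k) : Finset _) : Set (Set (ZMod (2*k+1) → Bool))) := by
    ext C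
    simp [hW, eq_comm]
  rw [hset, Set.ncard_coe_finset]
  apply Nat.eq_of_mul_eq_mul_left (Nat.succ_pos (2*k))
  rw [Nat.succ_eq_add_one, mul_catalan_eq_choose, ← card_weight,
    Finset.card_eq_sum_card_image (orbit k), mul_comm, ← smul_eq_mul]
  refine (Finset.sum_const_nat ?_).symm
  intro C hC
  obtain ⟨s, hs, rfl⟩ := Finset.mem_image.mp hC
  refine Eq.trans ?_ (card_fiber k s (by simpa [hW] using hs))
  rw [← Set.ncard_coe_finset]
  congr 1
  ext c
  simp [hW]
end

section
/- (Last part of Theorem 5.) For every natural number k, the Catalan number catalan(k) is odd if and only if k = 2^r − 1 for some natural number r (equivalently, k + 1 is a power of 2). -/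
/-!
Reduce Segner's recurrence `catalan (n + 1) = ∑ catalan i * catalan j` (over `i + j = n`) modulo 2.
The involution `(i, j) ↦ (j, i)` preserves summands, so only its fixed point, if any, survives.
For odd `n` there is none and `catalan (n + 1)` is even; for `n = 2 * m` the surviving term is
`catalan m ^ 2`, so `catalan (2 * m + 1)` has the parity of `catalan m`. The map `m ↦ 2 * m + 1`
doubles `m + 1`, so strong induction gives the claim.
-/

theorem even_catalan_two_mul_add_two (m : ℕ) : Even (catalan (2 * m + 2)) := by
  rw [← ZMod.natCast_eq_zero_iff_even, catalan_succ', Nat.cast_sum]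
  refine Finset.sum_involution (fun p _ => p.swap) ?_ ?_ ?_ ?_
  · intro p _
    simp only [Prod.fst_swap, Prod.snd_swap, mul_comm (catalan p.2)]
    exact CharTwo.add_self_eq_zero _
  · rintro ⟨i, j⟩ hp _ h
    simp only [Finset.HasAntidiagonal.mem_antidiagonal, Prod.swap_prod_mk, Prod.mk.injEq] at hp h
    omega
  · intro p hp
    simpa [add_comm] using hp
  · intro p _
    exact p.swap_swap

theorem odd_catalan_two_mul_add_one_iff (m : ℕ) :
    Odd (catalan (2 * m + 1)) ↔ Odd (catalan m) := by
  have hm : (m, m) ∈ Finset.HasAntidiagonal.antidiagonal (2 * m) := by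
    simp [two_mul]
  have h : ∑ p ∈ (Finset.HasAntidiagonal.antidiagonal (2 * m)).erase (m, m),
      ((catalan p.1 * catalan p.2 : ℕ) : ZMod 2) = 0 := by
    refine Finset.sum_involution (fun p _ => p.swap) ?_ ?_ ?_ ?_
    · intro p _
      simp only [Prod.fst_swap, Prod.snd_swap, mul_comm (catalan p.2)]
      exact CharTwo.add_self_eq_zero _
    · rintro ⟨i, j⟩ hp _ h
      simp only [Finset.mem_erase, Finset.HasAntidiagonal.mem_antidiagonal, Prod.swap_prod_mk, ne_eq,
        Prod.mk.injEq] at hp h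
      omega
    · rintro ⟨i, j⟩ hp
      simp only [Finset.mem_erase, Finset.HasAntidiagonal.mem_antidiagonal, Prod.swap_prod_mk, ne_eq,
        Prod.mk.injEq] at hp ⊢
      omega
    · intro p _
      exact p.swap_swap
  have key : ((catalan (2 * m + 1) : ℕ) : ZMod 2) = ((catalan m * catalan m : ℕ) : ZMod 2) := by
    rw [catalan_succ', Nat.cast_sum, ← Finset.add_sum_erase _ _ hm, h, add_zero]
  rw [← ZMod.natCast_eq_one_iff_odd, key, ZMod.natCast_eq_one_iff_odd, Nat.odd_mul, and_self]

/-- Last part of Theorem 5: the Catalan number `catalan k` is odd if and only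
if `k = 2^r − 1` for some natural number `r`, i.e. iff `k + 1` is a power of
`2`. -/
theorem stmt6 (k : ℕ) :
    Odd (catalan k) ↔ ∃ r : ℕ, k + 1 = 2 ^ r := by
  induction k using Nat.strong_induction_on with
  | _ k ih =>
  obtain rfl | ⟨m, rfl⟩ | ⟨m, rfl⟩ : k = 0 ∨ (∃ m, k = 2 * m + 1) ∨ ∃ m, k = 2 * m + 2 := by
    rcases Nat.even_or_odd' k with ⟨m, rfl | rfl⟩
    · rcases m with _ | m
      · exact Or.inl rfl
      · exact Or.inr (Or.inr ⟨m, by ring⟩)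
    · exact Or.inr (Or.inl ⟨m, rfl⟩)
  · exact iff_of_true (by simp) ⟨0, rfl⟩
  · rw [odd_catalan_two_mul_add_one_iff, ih m (by omega)]
    constructor
    · rintro ⟨r, hr⟩
      exact ⟨r + 1, by rw [pow_succ]; omega⟩
    · rintro ⟨_ | r, hr⟩
      · simp at hr
      · exact ⟨r, by rw [pow_succ] at hr; omega⟩
  · refine iff_of_false (Nat.not_odd_iff_even.mpr (even_catalan_two_mul_add_two m)) ?_
    rintro ⟨_ | r, hr⟩
    · simp at hr
    · rw [pow_succ] at hr
      omega
end

section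
/- (Part of Theorem 5: level counts of the tree T.) For every natural number m ≥ 0: the total number of pairs (k, a) with k ≥ 1, a ∈ N_k and (k−1) + a_{k−1} = 2m+1 equals C(2m+1, m); and the total number of pairs (k, a) with k ≥ 1, a ∈ N_k and (k−1) + a_{k−1} = 2m+2 equals 2·C(2m+1, m). (Here (k−1) + a_{k−1} is the level in the tree T of the node corresponding to a, and only finitely many k contribute to each sum.) -/
/-!
A sequence `a ∈ N_{p+1}` with last entry `q` encodes a lattice path from `(0, 0)` to `(p, q)`
that stays weakly below the diagonal, so for `q ≤ p + 1` there are `C(p+q, q) - C(p+q, q-1)` of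
them (the ballot numbers). Here this comes from the recursion
`b(p+1, q+1) = b(p+1, q) + b(p, q+1)`, obtained by deleting the last entry of the sequence:
`ncard_endAt_succ`, `ncard_endLe_succ` and `ncard_endAt_add`. Level `n` of the tree is the union
over `q ≤ n / 2` of the sequences with `p + q = n`, so the ballot numbers telescope and the level
has `C(n, n / 2)` nodes (`ncard_treeLevel`).
-/

/-- `Nset k` is the set of sequences `a = (a_0, …, a_{k−1})` of natural numbers
with `a_0 = 0` and `a_{i−1} ≤ a_i ≤ i` for `1 ≤ i ≤ k−1`. -/
def Nset (k : ℕ) : Set (Fin k → ℕ) :=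
  {a | (∀ h : 0 < k, a ⟨0, h⟩ = 0) ∧
    ∀ i j : Fin k, (j : ℕ) = (i : ℕ) + 1 → a i ≤ a j ∧ a j ≤ (j : ℕ)}

/-- The set of nodes of the tree `T` (pairs `(k, a)` with `k ≥ 1`, `a ∈ N_k`)
lying at level `(k−1) + a_{k−1} = m` of `T`. -/
def treeLevel (m : ℕ) : Set ((k : ℕ) × (Fin k → ℕ)) :=
  {p | ∃ h : 1 ≤ p.1, p.2 ∈ Nset p.1 ∧
    (p.1 - 1) + p.2 ⟨p.1 - 1, by omega⟩ = m}

/-- The sequences in `N_{p+1}` whose last entry `a_p` equals `q`. -/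
def endAt (p q : ℕ) : Set (Fin (p + 1) → ℕ) :=
  {a | a ∈ Nset (p + 1) ∧ a (Fin.last p) = q}

/-- The sequences in `N_{p+1}` whose last entry `a_p` is at most `q`. -/
def endLe (p q : ℕ) : Set (Fin (p + 1) → ℕ) :=
  {a | a ∈ Nset (p + 1) ∧ a (Fin.last p) ≤ q}

theorem Nset_le {k : ℕ} {a : Fin k → ℕ} (ha : a ∈ Nset k) (i : Fin k) : a i ≤ i := by
  obtain ⟨i, hi⟩ := i
  cases i with
  | zero => exact (ha.1 hi).le
  | succ i => exact (ha.2 ⟨i, by omega⟩ ⟨i + 1, hi⟩ rfl).2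

theorem Nset_finite (k : ℕ) : (Nset k).Finite :=
  (Set.finite_Iic (fun i : Fin k => (i : ℕ))).subset fun _ ha i => Nset_le ha i

theorem snoc_mem_Nset {p q : ℕ} {a : Fin (p + 1) → ℕ} :
    Fin.snoc (α := fun _ => ℕ) a q ∈ Nset (p + 2) ↔
      a ∈ Nset (p + 1) ∧ a (Fin.last p) ≤ q ∧ q ≤ p + 1 := by
  constructor
  · rintro ⟨h0, h1⟩
    refine ⟨⟨fun h => ?_, fun i j hij => ?_⟩, ?_⟩
    · have := h0 (by omega)
      rwa [show (⟨0, by omega⟩ : Fin (p + 2)) = Fin.castSucc ⟨0, h⟩ from rfl,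
        Fin.snoc_castSucc] at this
    · have := h1 i.castSucc j.castSucc hij
      simpa only [Fin.snoc_castSucc, Fin.val_castSucc] using this
    · have := h1 (Fin.last p).castSucc (Fin.last (p + 1)) rfl
      simpa only [Fin.snoc_castSucc, Fin.snoc_last, Fin.val_last] using this
  · rintro ⟨⟨h0, h1⟩, h2, h3⟩
    refine ⟨fun h => ?_, fun i j hij => ?_⟩
    · rw [show (⟨0, h⟩ : Fin (p + 2)) = Fin.castSucc ⟨0, by omega⟩ from rfl,
        Fin.snoc_castSucc]
      exact h0 _
    · induction j using Fin.lastCases with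
      | last =>
        obtain rfl : i = (Fin.last p).castSucc := by
          ext; simp at hij ⊢; omega
        simpa only [Fin.snoc_castSucc, Fin.snoc_last, Fin.val_last] using ⟨h2, h3⟩
      | cast j =>
        induction i using Fin.lastCases with
        | last => simp at hij; omega
        | cast i =>
          simpa only [Fin.snoc_castSucc, Fin.val_castSucc] using h1 i j hij

theorem endAt_succ {p q : ℕ} (hq : q ≤ p + 1) :
    endAt (p + 1) q = (fun a => Fin.snoc (α := fun _ => ℕ) a q) '' endLe p q := by
  ext b
  constructor
  · rintro ⟨hb, rfl⟩
    refine ⟨Fin.init b, ?_, Fin.snoc_init_self b⟩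
    rw [← Fin.snoc_init_self b] at hb
    have := snoc_mem_Nset.1 hb
    exact ⟨this.1, this.2.1⟩
  · rintro ⟨a, ⟨ha, hl⟩, rfl⟩
    exact ⟨snoc_mem_Nset.2 ⟨ha, hl, hq⟩, Fin.snoc_last _ _⟩

/-- Deleting the last entry is a bijection onto the sequences it may be appended to. -/
theorem ncard_endAt_succ {p q : ℕ} (hq : q ≤ p + 1) :
    (endAt (p + 1) q).ncard = (endLe p q).ncard := by
  rw [endAt_succ hq]
  exact Set.ncard_image_of_injective _ fun a b h => (Fin.snoc_inj.1 h).1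

theorem ncard_endLe_succ (p q : ℕ) :
    (endLe p (q + 1)).ncard = (endLe p q).ncard + (endAt p (q + 1)).ncard := by
  have h : endLe p (q + 1) = endLe p q ∪ endAt p (q + 1) := by
    ext a
    simp only [endLe, endAt, Set.mem_union, Set.mem_ofPred_eq, ← and_or_left, Nat.le_succ_iff]
  rw [h]
  refine Set.ncard_union_eq ?_ ((Nset_finite _).subset fun a h => h.1)
    ((Nset_finite _).subset fun a h => h.1)
  rw [Set.disjoint_left]
  rintro a ⟨_, h1⟩ ⟨_, h2⟩
  omega

theorem endAt_eq_empty {p q : ℕ} (h : p < q) : endAt p q = ∅ := by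
  ext a
  simp only [Set.mem_empty_iff_false, iff_false]
  rintro ⟨ha, hq⟩
  have := Nset_le ha (Fin.last p)
  simp at this
  omega

theorem ncard_endAt_zero (p : ℕ) : (endAt p 0).ncard = 1 := by
  induction p with
  | zero =>
    rw [Set.ncard_eq_one]
    refine ⟨fun _ => 0, ?_⟩
    ext a
    simp only [Set.mem_singleton_iff]
    constructor
    · rintro ⟨ha, -⟩
      funext i
      have := Nset_le ha i
      omega
    · rintro rfl
      exact ⟨⟨fun _ => rfl, fun i j _ => by simp⟩, rfl⟩
  | succ p ih =>
    rw [ncard_endAt_succ (by omega)]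
    simpa only [endLe, endAt, Nat.le_zero] using ih

/-- The ballot numbers. The boundary case `q = p` is included, where both sides are
`C(2p+1, p)` because `endAt p (p + 1)` is empty; the recursion reaches it. -/
theorem ncard_endAt_add (p q : ℕ) (h : q ≤ p) :
    (endAt p (q + 1)).ncard + (p + q + 1).choose q = (p + q + 1).choose (q + 1) := by
  induction p generalizing q with
  | zero =>
    obtain rfl : q = 0 := by omega
    simp [endAt_eq_empty]
  | succ p ihp =>
    induction q with
    | zero =>
      have h1 := ihp 0 (by omega)
      have h2 := ncard_endAt_zero (p + 1)
      rw [ncard_endAt_succ (by omega)] at h2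
      rw [ncard_endAt_succ (by omega), ncard_endLe_succ, h2]
      simp at h1 ⊢
      omega
    | succ q ihq =>
      have h1 := ihq (by omega)
      rcases h.eq_or_lt with h | h
      · obtain rfl : q = p := by omega
        rw [endAt_eq_empty (by omega), Set.ncard_empty, zero_add]
        exact Nat.choose_symm_of_eq_add (by omega)
      · have h2 := ihp (q + 1) (by omega)
        rw [ncard_endAt_succ (by omega)] at h1 ⊢
        rw [ncard_endLe_succ]
        rw [show p + 1 + q + 1 = p + q + 2 by omega] at h1
        rw [show p + (q + 1) + 1 = p + q + 2 by omega] at h2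
        rw [show p + 1 + (q + 1) + 1 = (p + q + 2) + 1 by omega,
          Nat.choose_succ_succ _ q, Nat.choose_succ_succ _ (q + 1)]
        simp only [Nat.succ_eq_add_one] at *
        omega

/-- The nodes of level `n` with last entry less than `j`; since the last entry of a node
`(k, a)` of level `n` is `n + 1 - k`, the condition is put on `k`. -/
def levelLt (n j : ℕ) : Set ((k : ℕ) × (Fin k → ℕ)) :=
  {p | p ∈ treeLevel n ∧ n + 1 < p.1 + j}

theorem levelLt_zero (n : ℕ) : levelLt n 0 = ∅ := by
  ext ⟨k, a⟩
  simp only [Set.mem_empty_iff_false, iff_false]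
  rintro ⟨⟨h, -, h2⟩, h3⟩
  simp only at h h2 h3
  omega

theorem levelLt_succ {n p j : ℕ} (h : p + j = n) :
    levelLt n (j + 1) = levelLt n j ∪ Sigma.mk (p + 1) '' endAt p j := by
  ext ⟨k, a⟩
  constructor
  · rintro ⟨hl, hk⟩
    simp only at hk
    by_cases hj : n + 1 < k + j
    · exact Or.inl ⟨hl, hj⟩
    · obtain rfl : k = p + 1 := by omega
      obtain ⟨_, ha, h2⟩ := hl
      refine Or.inr ⟨a, ⟨ha, ?_⟩, rfl⟩
      change p + a (Fin.last p) = n at h2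
      omega
  · rintro (⟨hl, hk⟩ | ⟨b, ⟨hb, hq⟩, he⟩)
    · exact ⟨hl, by simp only at hk ⊢; omega⟩
    · rw [← he]
      refine ⟨⟨by simp, hb, ?_⟩, by simp only; omega⟩
      change p + b (Fin.last p) = n
      omega

theorem levelLt_finite (n j : ℕ) (h : j ≤ n + 1) : (levelLt n j).Finite := by
  induction j with
  | zero => simp [levelLt_zero]
  | succ j ih =>
    rw [levelLt_succ (p := n - j) (by omega)]
    exact (ih (by omega)).union (((Nset_finite _).subset fun a h => h.1).image _)

theorem ncard_levelLt_succ {n p j : ℕ} (h : p + j = n) :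
    (levelLt n (j + 1)).ncard = (levelLt n j).ncard + (endAt p j).ncard := by
  have hinj : Function.Injective (Sigma.mk (β := fun k => Fin k → ℕ) (p + 1)) :=
    sigma_mk_injective
  rw [levelLt_succ h, ← Set.ncard_image_of_injective (endAt p j) hinj]
  refine Set.ncard_union_eq ?_ (levelLt_finite n j (by omega))
    (((Nset_finite _).subset fun a h => h.1).image _)
  rw [Set.disjoint_left]
  rintro _ ⟨_, h1⟩ ⟨a, _, rfl⟩
  simp only at h1
  omega

/-- The telescoped sum of ballot numbers. -/
theorem ncard_levelLt (n j : ℕ) (h : 2 * j ≤ n) : (levelLt n (j + 1)).ncard = n.choose j := by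
  induction j with
  | zero =>
    rw [ncard_levelLt_succ (add_zero n), levelLt_zero, ncard_endAt_zero]
    simp
  | succ j ih =>
    have h1 := ncard_endAt_add (n - (j + 1)) j (by omega)
    rw [ncard_levelLt_succ (p := n - (j + 1)) (by omega), ih (by omega)]
    rw [show n - (j + 1) + j + 1 = n by omega] at h1
    omega

theorem ncard_treeLevel (n : ℕ) : (treeLevel n).ncard = n.choose (n / 2) := by
  rw [← ncard_levelLt n (n / 2) (by omega)]
  congr 1
  ext ⟨k, a⟩
  refine ⟨fun hl => ⟨hl, ?_⟩, fun hl => hl.1⟩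
  -- The last entry is at most `k - 1`, and the two add up to `n`.
  obtain ⟨hk, ha, h2⟩ := hl
  change 1 ≤ k at hk
  have := Nset_le ha ⟨k - 1, by change k - 1 < k; omega⟩
  simp only at h2 this ⊢
  omega

/-- Part of Theorem 5: the tree `T` has `C(2m+1, m)` nodes at level `2m+1` and
`2·C(2m+1, m)` nodes at level `2m+2`. -/
theorem stmt10 (m : ℕ) :
    (treeLevel (2*m+1)).ncard = Nat.choose (2*m+1) m ∧
    (treeLevel (2*m+2)).ncard = 2 * Nat.choose (2*m+1) m := by
  constructor
  · rw [ncard_treeLevel, show (2 * m + 1) / 2 = m by omega]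
  · rw [ncard_treeLevel, show (2 * m + 2) / 2 = m + 1 by omega, Nat.choose_succ_succ,
      Nat.choose_symm_of_eq_add (show 2 * m + 1 = m.succ + m by omega)]
    ring
end

section
/- Let k ≥ 1 and n = 2k+1. Each of the following two weight-k binary n-strings has at least two distinct rotations that are antipalindromic: the string s₁ with support {k+1, k+2, …, 2k} (i.e., 0^{k+1}1^k, zeros followed by ones), and the string s₂ with support {2, 4, …, 2k} (i.e., 0(01)^k, alternating zeros and ones starting with a double zero). Hence the corresponding vertices of the reduced graph R_k carry two loops each. -/
/-- The string `0^{k+1}1^k`, with support `{k+1, …, 2k}`. -/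
def zeroesOnes (k : ℕ) : ZMod (2*k+1) → Bool :=
  fun i => decide (i ∈ (Finset.Icc (k+1) (2*k)).image
    (fun j : ℕ => (j : ZMod (2*k+1))))

/-- The string `0(01)^k`, with support `{2, 4, …, 2k}`. -/
def altZeroesOnes (k : ℕ) : ZMod (2*k+1) → Bool :=
  fun i => decide (i ∈ (Finset.Icc 1 k).image
    (fun j : ℕ => ((2*j : ℕ) : ZMod (2*k+1))))

/-- A rotation by `t` is antipalindromic if `-1 - 2t` is not a sum of two support elements. -/
lemma supp_rot_subset_aleph (k : ℕ) (s : ZMod (2*k+1) → Bool) (t : ZMod (2*k+1))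
    (h : ∀ i j, s i = true → s j = true → i + j + 2 * t + 1 ≠ 0) :
    supp k (rot k t s) ⊆ supp k (aleph k (rot k t s)) := by
  intro i hi
  have hi' : s (i - t) = true := (Finset.mem_filter.1 hi).2
  refine Finset.mem_filter.2 ⟨Finset.mem_univ _, ?_⟩
  simp only [rot, aleph, Bool.not_eq_true']
  by_contra hj
  rw [Bool.not_eq_false] at hj
  apply h _ _ hi' hj
  have hn : ((2*k+1 : ℕ) : ZMod (2*k+1)) = 0 := ZMod.natCast_self _
  push_cast at hn ⊢
  linear_combination hn

lemma rot_ne_rot (k : ℕ) (s : ZMod (2*k+1) → Bool) (t₁ t₂ : ZMod (2*k+1))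
    (h0 : s 0 = false) (h : s (t₂ - t₁) = true) : rot k t₁ s ≠ rot k t₂ s := by
  intro e
  have := congrFun e t₂
  simp [rot, h0, h] at this

lemma zeroesOnes_eq_true (k : ℕ) (i : ZMod (2*k+1)) :
    zeroesOnes k i = true ↔ ∃ a : ℕ, (k + 1 ≤ a ∧ a ≤ 2 * k) ∧ (a : ZMod (2*k+1)) = i := by
  simp [zeroesOnes]

lemma altZeroesOnes_eq_true (k : ℕ) (i : ZMod (2*k+1)) :
    altZeroesOnes k i = true ↔
      ∃ a : ℕ, (1 ≤ a ∧ a ≤ k) ∧ ((2 * a : ℕ) : ZMod (2*k+1)) = i := by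
  simp [altZeroesOnes]

lemma natCast_ne_zero_of_lt (k m : ℕ) (h1 : 0 < m) (h2 : m < 2 * k + 1) :
    (m : ZMod (2*k+1)) ≠ 0 := by
  rw [Ne, ZMod.natCast_eq_zero_iff]
  exact Nat.not_dvd_of_pos_of_lt h1 h2

/-- Doubling is injective modulo the odd number `2k+1`. -/
lemma two_mul_ne_zero_of_ne_zero (k : ℕ) (x : ZMod (2*k+1)) (hx : x ≠ 0) : 2 * x ≠ 0 := by
  intro h
  apply hx
  have hn : ((2*k+1 : ℕ) : ZMod (2*k+1)) = 0 := ZMod.natCast_self _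
  push_cast at hn
  -- `-k` is the inverse of `2`
  linear_combination x * hn - k * h

/-- Each of the strings `0^{k+1}1^k` and `0(01)^k` has at least two distinct
antipalindromic rotations; hence the corresponding vertices of the reduced
graph `R_k` carry two loops each. -/
theorem stmt12 (k : ℕ) (hk : 1 ≤ k) :
    (∃ t₁ t₂ : ZMod (2*k+1),
      rot k t₁ (zeroesOnes k) ≠ rot k t₂ (zeroesOnes k) ∧
      supp k (rot k t₁ (zeroesOnes k)) ⊆ supp k (aleph k (rot k t₁ (zeroesOnes k))) ∧
      supp k (rot k t₂ (zeroesOnes k)) ⊆ supp k (aleph k (rot k t₂ (zeroesOnes k)))) ∧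
    (∃ t₁ t₂ : ZMod (2*k+1),
      rot k t₁ (altZeroesOnes k) ≠ rot k t₂ (altZeroesOnes k) ∧
      supp k (rot k t₁ (altZeroesOnes k)) ⊆ supp k (aleph k (rot k t₁ (altZeroesOnes k))) ∧
      supp k (rot k t₂ (altZeroesOnes k)) ⊆ supp k (aleph k (rot k t₂ (altZeroesOnes k)))) := by
  have hn : ((2*k+1 : ℕ) : ZMod (2*k+1)) = 0 := ZMod.natCast_self _
  push_cast at hn
  refine ⟨⟨k, 0, rot_ne_rot k _ _ _ ?_ ?_, supp_rot_subset_aleph k _ _ ?_,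
    supp_rot_subset_aleph k _ _ ?_⟩, ⟨k, k - 1, rot_ne_rot k _ _ _ ?_ ?_,
    supp_rot_subset_aleph k _ _ ?_, supp_rot_subset_aleph k _ _ ?_⟩⟩
  · rw [← Bool.not_eq_true, zeroesOnes_eq_true]
    rintro ⟨a, ha, h⟩
    exact natCast_ne_zero_of_lt k a (by lia) (by lia) h
  · rw [zeroesOnes_eq_true]
    refine ⟨k + 1, by lia, ?_⟩
    push_cast
    linear_combination hn
  · intro i j hi hj h
    obtain ⟨a, ha, rfl⟩ := (zeroesOnes_eq_true k i).1 hi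
    obtain ⟨b, hb, rfl⟩ := (zeroesOnes_eq_true k j).1 hj
    -- subtracting `2k+1` once brings `a + b` into the range `1, …, 2k-1`
    obtain ⟨m, hm⟩ : ∃ m, a + b = m + (2 * k + 1) := ⟨a + b - (2 * k + 1), by lia⟩
    apply natCast_ne_zero_of_lt k m (by lia) (by lia)
    have hm' := congrArg (Nat.cast : ℕ → ZMod (2*k+1)) hm
    push_cast at hm'
    linear_combination h - hm' - 2 * hn
  · intro i j hi hj h
    obtain ⟨a, ha, rfl⟩ := (zeroesOnes_eq_true k i).1 hi
    obtain ⟨b, hb, rfl⟩ := (zeroesOnes_eq_true k j).1 hj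
    -- subtracting `2k+1` once brings `a + b + 1` into the range `2, …, 2k`
    obtain ⟨m, hm⟩ : ∃ m, a + b + 1 = m + (2 * k + 1) := ⟨a + b + 1 - (2 * k + 1), by lia⟩
    apply natCast_ne_zero_of_lt k m (by lia) (by lia)
    have hm' := congrArg (Nat.cast : ℕ → ZMod (2*k+1)) hm
    push_cast at hm'
    linear_combination h - hm' - hn
  · rw [← Bool.not_eq_true, altZeroesOnes_eq_true]
    rintro ⟨a, ha, h⟩
    exact natCast_ne_zero_of_lt k (2 * a) (by lia) (by lia) h
  · rw [altZeroesOnes_eq_true]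
    refine ⟨k, by lia, ?_⟩
    push_cast
    linear_combination hn
  · intro i j hi hj h
    obtain ⟨a, ha, rfl⟩ := (altZeroesOnes_eq_true k i).1 hi
    obtain ⟨b, hb, rfl⟩ := (altZeroesOnes_eq_true k j).1 hj
    apply two_mul_ne_zero_of_ne_zero k _ (natCast_ne_zero_of_lt k (a + b) (by lia) (by lia))
    push_cast at h ⊢
    linear_combination h - hn
  · intro i j hi hj h
    obtain ⟨a, ha, rfl⟩ := (altZeroesOnes_eq_true k i).1 hi
    obtain ⟨b, hb, rfl⟩ := (altZeroesOnes_eq_true k j).1 hj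
    obtain ⟨m, hm⟩ : ∃ m, a + b = m + 1 := ⟨a + b - 1, by lia⟩
    apply two_mul_ne_zero_of_ne_zero k _ (natCast_ne_zero_of_lt k m (by lia) (by lia))
    have hm' := congrArg (Nat.cast : ℕ → ZMod (2*k+1)) hm
    push_cast at h hm'
    linear_combination h - 2 * hm' - hn
end

section
/- (Lexical color bijection at each vertex.) Let k ≥ 1 and n = 2k+1. For every binary n-string s of weight k, the map sending each position j ∈ ZMod n with s(j) = false (there are exactly k+1 of them) to the lexical value L(σ_{−j} s) is a bijection onto {0, 1, …, k}. Hence the lexical coloring assigns the k+1 edges of M_k incident to s pairwise distinct colors from the palette {0, …, k}. -/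
/-- The lexical value `L(b)` of a binary `(2k+1)`-string `b` (intended for `b`
of weight `k` with `b 0 = false`): the number of indices `i ∈ {1, …, 2k}` with
`b i = false` such that among the entries at `1, …, i−1` the `false` entries
are at least as many as the `true` ones. -/
def lex (k : ℕ) (b : ZMod (2*k+1) → Bool) : ℕ :=
  ((Finset.Icc 1 (2*k)).filter fun i : ℕ =>
    b (i : ZMod (2*k+1)) = false ∧
    ((Finset.Ico 1 i).filter fun j : ℕ => b (j : ZMod (2*k+1)) = true).card ≤
      ((Finset.Ico 1 i).filter fun j : ℕ => b (j : ZMod (2*k+1)) = false).card).card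

/-- The elements of a finite set `A`, linearly ordered by an injective function `g`, are mapped
bijectively onto `{0, …, |A| - 1}` by counting the elements of `A` above a given one. -/
lemma bijOn_rank {α : Type*} (A : Finset α) (g : α → ℤ) (hg : Function.Injective g) :
    Set.BijOn (fun a => (A.filter fun b => g a < g b).card) A (Finset.range A.card) := by
  have hmaps : Set.MapsTo (fun a => (A.filter fun b => g a < g b).card) A
      (Finset.range A.card) := by
    intro a ha
    simp only [Finset.coe_range, Set.mem_Iio]
    refine Finset.card_lt_card (Finset.filter_ssubset.2 ⟨a, ha, lt_irrefl _⟩)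
  have hlt : ∀ a ∈ A, ∀ b ∈ A, g a < g b →
      (A.filter fun c => g b < g c).card < (A.filter fun c => g a < g c).card := by
    intro a _ b hb hab
    refine Finset.card_lt_card (Finset.ssubset_iff_of_subset ?_ |>.2 ⟨b, ?_, ?_⟩)
    · intro c hc
      simp only [Finset.mem_filter] at hc ⊢
      exact ⟨hc.1, hab.trans hc.2⟩
    · simp [hb, hab]
    · simp
  have hinj : Set.InjOn (fun a => (A.filter fun b => g a < g b).card) A := by
    intro a ha b hb hab
    simp only at hab
    rcases lt_trichotomy (g a) (g b) with h | h | h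
    · have := hlt a ha b hb h
      omega
    · exact hg h
    · have := hlt b hb a ha h
      omega
  exact ⟨hmaps, hinj, Finset.surjOn_of_injOn_of_card_le _ hmaps hinj (by simp)⟩

/-- The step of the lattice path of a string: up at `false`, down at `true`. -/
def pathStep (b : Bool) : ℤ := if b = true then -1 else 1

/-- The height of the lattice path of the periodic extension of `s` to `ℕ` after its first `m`
entries: the number of `false` minus the number of `true` entries at positions `0, …, m - 1`. -/
def height (k : ℕ) (s : ZMod (2*k+1) → Bool) (m : ℕ) : ℤ :=
  ∑ i ∈ Finset.range m, pathStep (s (i : ZMod (2*k+1)))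

lemma height_succ (k : ℕ) (s : ZMod (2*k+1) → Bool) (m : ℕ) :
    height k s (m+1) = height k s m + pathStep (s (m : ZMod (2*k+1))) :=
  Finset.sum_range_succ _ _

lemma card_false (k : ℕ) (s : ZMod (2*k+1) → Bool) (hs : wt k s = k) :
    (Finset.univ.filter fun i => s i = false).card = k + 1 := by
  have h := Finset.card_filter_add_card_filter_not (s := (Finset.univ : Finset (ZMod (2*k+1))))
    (fun i => s i = true)
  simp only [Finset.card_univ, ZMod.card, Bool.not_eq_true] at h
  simp only [wt, supp] at hs
  omega

lemma height_period (k : ℕ) (s : ZMod (2*k+1) → Bool) (hs : wt k s = k) :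
    height k s (2*k+1) = 1 := by
  have h1 : height k s (2*k+1) = ∑ z : ZMod (2*k+1), pathStep (s z) := by
    refine Finset.sum_bij (fun i _ => (i : ZMod (2*k+1))) (by simp) ?_ ?_ (by simp)
    · intro a ha b hb hab
      have := congrArg ZMod.val hab
      rwa [ZMod.val_natCast_of_lt (Finset.mem_range.1 ha),
        ZMod.val_natCast_of_lt (Finset.mem_range.1 hb)] at this
    · intro z _
      exact ⟨z.val, Finset.mem_range.2 (ZMod.val_lt z), ZMod.natCast_zmod_val z⟩
  have h2 := card_false k s hs
  simp only [wt, supp] at hs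
  simp only [h1, pathStep, Finset.sum_ite, Finset.sum_const, Bool.not_eq_true, hs, h2]
  simp

lemma height_add_period (k : ℕ) (s : ZMod (2*k+1) → Bool) (hs : wt k s = k) (m : ℕ) :
    height k s (m + (2*k+1)) = height k s m + 1 := by
  induction m with
  | zero => rw [zero_add, height_period k s hs]; simp [height]
  | succ m ih =>
    rw [show m + 1 + (2*k+1) = (m + (2*k+1)) + 1 by ring, height_succ, height_succ, ih,
      Nat.cast_add, ZMod.natCast_self, add_zero]
    ring

/-- The sheared height `n * height m - m` at the representative `m ∈ {0, …, n - 1}` of a residue,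
where `n = 2k + 1`. When `s` has weight `k`, any other representative gives the same value. -/
def level (k : ℕ) (s : ZMod (2*k+1) → Bool) (z : ZMod (2*k+1)) : ℤ :=
  (2*k+1) * height k s z.val - z.val

lemma level_natCast (k : ℕ) (s : ZMod (2*k+1) → Bool) (hs : wt k s = k) (m : ℕ) :
    level k s (m : ZMod (2*k+1)) = (2*k+1) * height k s m - m := by
  induction m using Nat.strong_induction_on with
  | _ m ih =>
    rcases lt_or_ge m (2*k+1) with h | h
    · rw [level, ZMod.val_natCast_of_lt h]
    · obtain ⟨r, rfl⟩ := Nat.exists_eq_add_of_le' h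
      have hc : ((r + (2*k+1) : ℕ) : ZMod (2*k+1)) = (r : ZMod (2*k+1)) := by
        rw [Nat.cast_add, ZMod.natCast_self, add_zero]
      rw [hc, ih r (by omega), height_add_period k s hs]
      push_cast
      ring

lemma level_injective (k : ℕ) (s : ZMod (2*k+1) → Bool) : Function.Injective (level k s) := by
  have hcast : ∀ z, ((level k s z : ℤ) : ZMod (2*k+1)) = -z := by
    intro z
    have h0 : ((2*k+1 : ℤ) : ZMod (2*k+1)) = 0 := by
      exact_mod_cast ZMod.natCast_self (2*k+1)
    rw [level, Int.cast_sub, Int.cast_mul, h0]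
    simp
  intro a b hab
  have := congrArg (Int.cast : ℤ → ZMod (2*k+1)) hab
  rwa [hcast, hcast, neg_inj] at this

/-- The excess of `false` over `true` entries strictly between `J` and `J + 1 + i` is the
difference of the heights at the ends of that range. -/
lemma card_sub_card_eq_height (k : ℕ) (s : ZMod (2*k+1) → Bool) (J i : ℕ) :
    (((Finset.Ico 1 (i+1)).filter fun t : ℕ => s ((J + t : ℕ) : ZMod (2*k+1)) = false).card : ℤ) -
      ((Finset.Ico 1 (i+1)).filter fun t : ℕ => s ((J + t : ℕ) : ZMod (2*k+1)) = true).card =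
    height k s (J + (i+1)) - height k s (J + 1) := by
  induction i with
  | zero => simp
  | succ i ih =>
    rw [← add_assoc J (i+1) 1, height_succ, ← Finset.insert_Ico_right_eq_Ico_add_one (by omega),
      Finset.filter_insert, Finset.filter_insert]
    cases h : s ((J + (i+1) : ℕ) : ZMod (2*k+1))
    · simp [pathStep] at ih ⊢
      linarith
    · simp [pathStep] at ih ⊢
      linarith

/-- The lexical color of the edge at a `false` position `j` is the rank of `j` among the `false`
positions with respect to decreasing level. -/
lemma lex_rot_eq_rank (k : ℕ) (s : ZMod (2*k+1) → Bool) (hs : wt k s = k)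
    (j : ZMod (2*k+1)) (hj : s j = false) :
    lex k (rot k (-j) s) =
      ((Finset.univ.filter fun z => s z = false).filter
        fun z => level k s j < level k s z).card := by
  obtain ⟨J, rfl⟩ : ∃ J : ℕ, (J : ZMod (2*k+1)) = j := ⟨j.val, ZMod.natCast_zmod_val j⟩
  have hrot : ∀ t : ℕ, rot k (-(J : ZMod (2*k+1))) s (t : ZMod (2*k+1)) =
      s ((J + t : ℕ) : ZMod (2*k+1)) := by
    intro t
    simp [rot, add_comm]
  have hcond : ∀ i : ℕ, 1 ≤ i → i ≤ 2*k →
      (((Finset.Ico 1 i).filter fun t : ℕ => s ((J + t : ℕ) : ZMod (2*k+1)) = true).card ≤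
        ((Finset.Ico 1 i).filter fun t : ℕ => s ((J + t : ℕ) : ZMod (2*k+1)) = false).card ↔
      level k s (J : ZMod (2*k+1)) < level k s ((J + i : ℕ) : ZMod (2*k+1))) := by
    intro i h1 h2
    rw [level_natCast k s hs, level_natCast k s hs]
    obtain ⟨i, rfl⟩ := Nat.exists_eq_add_of_le' h1
    have h3 := card_sub_card_eq_height k s J i
    have h4 : height k s (J + 1) = height k s J + 1 := by
      rw [height_succ, hj]; rfl
    have h2' : (i : ℤ) + 1 ≤ 2 * k := by exact_mod_cast h2
    have h5 : (0 : ℤ) ≤ i := by positivity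
    rw [show ((J + (i+1) : ℕ) : ℤ) = J + (i + 1) by push_cast; rfl]
    constructor
    · intro h
      have h6 : height k s J + 1 ≤ height k s (J + (i+1)) := by omega
      nlinarith
    · intro h
      -- A height at most that of `J` would already force the level down.
      by_contra hcon
      have h6 : height k s (J + (i+1)) ≤ height k s J := by omega
      nlinarith
  unfold lex
  simp only [hrot]
  refine Finset.card_bij (fun i _ => ((J + i : ℕ) : ZMod (2*k+1))) ?_ ?_ ?_
  · intro i hi
    simp only [Finset.mem_filter, Finset.mem_Icc, Finset.mem_univ, true_and] at hi ⊢
    exact ⟨hi.2.1, (hcond i hi.1.1 hi.1.2).1 hi.2.2⟩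
  · intro a ha b hb hab
    simp only [Finset.mem_filter, Finset.mem_Icc] at ha hb
    simp only [Nat.cast_add, add_right_inj] at hab
    have := congrArg ZMod.val hab
    rwa [ZMod.val_natCast_of_lt (by omega), ZMod.val_natCast_of_lt (by omega)] at this
  · intro z hz
    simp only [Finset.mem_filter, Finset.mem_univ, true_and] at hz
    have hi : ((J + (z - (J : ZMod (2*k+1))).val : ℕ) : ZMod (2*k+1)) = z := by
      rw [Nat.cast_add, ZMod.natCast_zmod_val]
      ring
    have hpos : 1 ≤ (z - (J : ZMod (2*k+1))).val := by
      rw [Nat.one_le_iff_ne_zero, Ne, ZMod.val_eq_zero, sub_eq_zero]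
      rintro rfl
      exact lt_irrefl _ hz.2
    have hlt := ZMod.val_lt (z - (J : ZMod (2*k+1)))
    refine ⟨(z - (J : ZMod (2*k+1))).val, ?_, hi⟩
    simp only [Finset.mem_filter, Finset.mem_Icc]
    refine ⟨⟨hpos, by omega⟩, ?_, ?_⟩
    · rw [hi]; exact hz.1
    · rw [hcond _ hpos (by omega), hi]; exact hz.2

/-- Lexical color bijection at each vertex: for a weight-`k` string `s`, the
positions `j` with `s j = false` (there are `k+1` of them) are mapped
bijectively onto the color palette `{0, …, k}` by `j ↦ L(σ_{−j} s)`. -/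
theorem stmt14 (k : ℕ) (hk : 1 ≤ k) (s : ZMod (2*k+1) → Bool) (hs : wt k s = k) :
    {j : ZMod (2*k+1) | s j = false}.ncard = k + 1 ∧
    Set.BijOn (fun j : ZMod (2*k+1) => lex k (rot k (-j) s))
      {j : ZMod (2*k+1) | s j = false} {c : ℕ | c ≤ k} := by
  have hset : {j : ZMod (2*k+1) | s j = false} =
      ((Finset.univ.filter fun z => s z = false : Finset (ZMod (2*k+1))) : Set _) := by
    ext; simp
  have hpal : {c : ℕ | c ≤ k} = (Finset.range (k+1) : Set ℕ) := by
    ext; simp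
  constructor
  · rw [hset, Set.ncard_coe_finset, card_false k s hs]
  · have h := bijOn_rank (Finset.univ.filter fun z => s z = false) (level k s)
      (level_injective k s)
    rw [card_false k s hs] at h
    rw [hpal, hset]
    refine h.congr fun j hj => (lex_rot_eq_rank k s hs j ?_).symm
    simpa using hj
end

section
/- (Reflection invariance of the lexical color; collapse of the 1-factorization to R_k.) Let k ≥ 1 and n = 2k+1. Let s be a binary n-string of weight k, let j ∈ ZMod n with s(j) = false, and let c be the string obtained from s by flipping position j to true. Then ℵ(c) is obtained from... ℵ(s) by removing position 2k − j from its support, and the lexical colors of the two edges agree: L(σ_{−j} s) = L(σ_{−(2k−j)} ℵ(c)). Hence each skew specular edge pair of M_k/π receives a single well-defined color, and the lexical (k+1)-edge-coloring descends to the reduced graph R_k. -/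
/-- The number of indices `i ∈ {1, …, m-1}` with `f i = v`. -/
def tally (f : ℕ → Bool) (v : Bool) (m : ℕ) : ℕ :=
  ((Finset.Ico 1 m).filter fun i => f i = v).card

lemma tally_succ (f : ℕ → Bool) (v : Bool) (m : ℕ) (hm : 1 ≤ m) :
    tally f v (m + 1) = tally f v m + if f m = v then 1 else 0 := by
  unfold tally
  rw [← Finset.insert_Ico_right_eq_Ico_add_one hm, Finset.filter_insert]
  split_ifs with h
  · rw [Finset.card_insert_of_notMem (by simp)]
  · rfl

/-- Up-steps from height `≥ 0` minus down-steps to height `≥ 0` telescope to the positive part of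
the height; the latter is the truncated difference of the two tallies. -/
lemma up_eq_down_add (f : ℕ → Bool) (n : ℕ) :
    ((Finset.Icc 1 n).filter fun i => f i = false ∧ tally f true i ≤ tally f false i).card
      = ((Finset.Icc 1 n).filter fun i =>
          f i = true ∧ tally f true (i + 1) ≤ tally f false (i + 1)).card
        + (tally f false (n + 1) - tally f true (n + 1)) := by
  induction n with
  | zero => simp [tally]
  | succ n ih =>
    have ht := tally_succ f true (n + 1) (by omega)
    have hf := tally_succ f false (n + 1) (by omega)
    rw [← Finset.insert_Icc_right_eq_Icc_add_one (by omega), Finset.filter_insert,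
      Finset.filter_insert]
    have hc : ∀ p : ℕ → Prop, ∀ [DecidablePred p],
        (insert (n + 1) ((Finset.Icc 1 n).filter p)).card
          = ((Finset.Icc 1 n).filter p).card + 1 := fun p _ =>
      Finset.card_insert_of_notMem (by simp)
    cases h : f (n + 1) <;> simp only [h] at ht hf <;> split_ifs <;>
      (try simp only [hc]) <;> simp_all <;> omega

/-- Tallies of the reversed and complemented sequence are tallies of final segments. -/
lemma tally_reflect (f g : ℕ → Bool) (N : ℕ)
    (hg : ∀ i, 1 ≤ i → i ≤ N → g i = !f (N + 1 - i)) (v : Bool) (m : ℕ) (h1 : 1 ≤ m)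
    (hm : m ≤ N + 1) :
    tally g v m + tally f (!v) (N + 2 - m) = tally f (!v) (N + 1) := by
  induction m, h1 using Nat.le_induction with
  | base => simp [tally]
  | succ m h1 ih =>
    have ih := ih (by omega)
    have e : N + 2 - m = (N + 2 - (m + 1)) + 1 := by omega
    have e' : N + 2 - (m + 1) = N + 1 - m := by omega
    rw [e, tally_succ f _ _ (by omega)] at ih
    rw [tally_succ g _ _ h1, hg m h1 (by omega), ← ih, e']
    cases f (N + 1 - m) <;> cases v <;> simp <;> omega

/-- For a path ending at height `0`, the up-steps of the reversed path that start at height `≥ 0`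
correspond to the down-steps of the original path that end at height `≥ 0`. -/
lemma card_reflect (f g : ℕ → Bool) (N : ℕ)
    (hg : ∀ i, 1 ≤ i → i ≤ N → g i = !f (N + 1 - i))
    (hbal : tally f true (N + 1) = tally f false (N + 1)) :
    ((Finset.Icc 1 N).filter fun i => g i = false ∧ tally g true i ≤ tally g false i).card
      = ((Finset.Icc 1 N).filter fun i =>
          f i = true ∧ tally f true (i + 1) ≤ tally f false (i + 1)).card := by
  have key : ∀ i, 1 ≤ i → i ≤ N →
      ((g i = false ∧ tally g true i ≤ tally g false i) ↔
        (f (N + 1 - i) = true ∧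
          tally f true (N + 1 - i + 1) ≤ tally f false (N + 1 - i + 1))) := by
    intro i h1 h2
    have a := tally_reflect f g N hg true i h1 (by omega)
    have b := tally_reflect f g N hg false i h1 (by omega)
    have e : N + 2 - i = N + 1 - i + 1 := by omega
    simp only [Bool.not_true, Bool.not_false, e] at a b
    rw [hg i h1 h2, Bool.not_eq_false']
    refine and_congr_right fun _ => ?_
    omega
  refine Finset.card_nbij' (fun i => N + 1 - i) (fun i => N + 1 - i) ?_ ?_ ?_ ?_
  · intro i hi
    simp only [Finset.coe_filter, Finset.mem_Icc, Set.mem_ofPred_eq] at hi ⊢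
    exact ⟨by omega, (key i hi.1.1 hi.1.2).1 hi.2⟩
  · intro i hi
    simp only [Finset.coe_filter, Finset.mem_Icc, Set.mem_ofPred_eq] at hi ⊢
    refine ⟨by omega, (key _ (by omega) (by omega)).2 ?_⟩
    have e : N + 1 - (N + 1 - i) = i := by omega
    rw [e]
    exact hi.2
  · intro i hi
    simp only [Finset.coe_filter, Finset.mem_Icc, Set.mem_ofPred_eq] at hi
    dsimp only
    omega
  · intro i hi
    simp only [Finset.coe_filter, Finset.mem_Icc, Set.mem_ofPred_eq] at hi
    dsimp only
    omega

lemma tally_add (f : ℕ → Bool) (m : ℕ) : tally f true (m + 1) + tally f false (m + 1) = m := by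
  induction m with
  | zero => simp [tally]
  | succ m ih =>
    rw [tally_succ f true (m + 1) (by omega), tally_succ f false (m + 1) (by omega)]
    cases f (m + 1) <;> simp <;> omega

/-- Since `s j = false`, the support of `s` is read off from the entries of `σ_{-j} s` at
`1, …, 2k`. -/
lemma tally_rot_true (k : ℕ) (s : ZMod (2*k+1) → Bool) (j : ZMod (2*k+1)) (hj : s j = false) :
    tally (fun i : ℕ => rot k (-j) s (i : ZMod (2*k+1))) true (2*k+1) = wt k s := by
  unfold tally wt supp
  refine Finset.card_nbij' (fun i : ℕ => (i : ZMod (2*k+1)) + j) (fun x => (x - j).val) ?_ ?_ ?_ ?_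
  · intro i hi
    simpa [rot] using (Finset.mem_filter.1 hi).2
  · intro x hx
    have hx' : s x = true := by simpa using hx
    have hne : (x - j).val ≠ 0 := by
      rw [Ne, ZMod.val_eq_zero, sub_eq_zero]
      rintro rfl
      simp [hj] at hx'
    have := ZMod.val_lt (x - j)
    refine Finset.mem_coe.2 (Finset.mem_filter.2 ⟨Finset.mem_Ico.2 ⟨Nat.pos_of_ne_zero hne, this⟩, ?_⟩)
    simpa [rot] using hx'
  · intro i hi
    simp only [Finset.coe_filter, Finset.mem_Ico, Set.mem_ofPred_eq] at hi
    simp only [add_sub_cancel_right]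
    exact ZMod.val_cast_of_lt hi.1.2
  · intro x _
    simp

lemma tally_rot_eq (k : ℕ) (s : ZMod (2*k+1) → Bool) (hs : wt k s = k) (j : ZMod (2*k+1))
    (hj : s j = false) :
    tally (fun i : ℕ => rot k (-j) s (i : ZMod (2*k+1))) true (2*k+1)
      = tally (fun i : ℕ => rot k (-j) s (i : ZMod (2*k+1))) false (2*k+1) := by
  have h1 := tally_rot_true k s j hj
  have h2 := tally_add (fun i : ℕ => rot k (-j) s (i : ZMod (2*k+1))) (2*k)
  omega

/-- Away from index `0`, the rotated reflected string is the complemented reversal of the rotated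
string on `1, …, 2k`. -/
lemma rot_aleph_update (k : ℕ) (s : ZMod (2*k+1) → Bool) (j : ZMod (2*k+1)) (i : ℕ)
    (h1 : 1 ≤ i) (h2 : i ≤ 2*k) :
    rot k (-(((2*k : ℕ) : ZMod (2*k+1)) - j)) (aleph k (Function.update s j true)) (i : ZMod (2*k+1))
      = !rot k (-j) s ((2*k+1-i : ℕ) : ZMod (2*k+1)) := by
  have hi : (i : ZMod (2*k+1)) ≠ 0 := by
    rw [Ne, ZMod.natCast_eq_zero_iff]
    exact Nat.not_dvd_of_pos_of_lt (by omega) (by omega)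
  have e : ((2*k+1-i : ℕ) : ZMod (2*k+1)) = -(i : ZMod (2*k+1)) := by
    rw [Nat.cast_sub (by omega), ZMod.natCast_self, zero_sub]
  have e2 : ((2*k : ℕ) : ZMod (2*k+1)) - ((i : ZMod (2*k+1)) - -(((2*k : ℕ) : ZMod (2*k+1)) - j))
      = j - i := by ring
  have e3 : -(i : ZMod (2*k+1)) - -j = j - i := by ring
  unfold rot aleph
  rw [e, e2, e3, Function.update_of_ne]
  intro h
  exact hi (by simpa using h)

/-- Reflection invariance of the lexical color: if `c` is obtained from the
weight-`k` string `s` by flipping position `j` (with `s j = false`) to `true`,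
then `ℵ(c)` is obtained from `ℵ(s)` by setting position `2k − j` to `false`,
and the lexical colors of the edge `s—c` and its reflected edge `ℵ(c)—ℵ(s)`
agree; hence the lexical `(k+1)`-edge-coloring descends to `R_k`. -/
theorem stmt16 (k : ℕ) (hk : 1 ≤ k) (s : ZMod (2*k+1) → Bool) (hs : wt k s = k)
    (j : ZMod (2*k+1)) (hj : s j = false) :
    aleph k (Function.update s j true)
      = Function.update (aleph k s) (((2*k : ℕ) : ZMod (2*k+1)) - j) false ∧
    lex k (rot k (-j) s)
      = lex k (rot k (-(((2*k : ℕ) : ZMod (2*k+1)) - j))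
          (aleph k (Function.update s j true))) := by
  constructor
  · funext i
    unfold aleph
    by_cases h : i = ((2*k : ℕ) : ZMod (2*k+1)) - j
    · subst h
      simp
    · have h' : ((2*k : ℕ) : ZMod (2*k+1)) - i ≠ j := by
        rintro rfl
        exact h (by ring)
      rw [Function.update_of_ne h, Function.update_of_ne h']
  · have hbal := tally_rot_eq k s hs j hj
    have h1 := up_eq_down_add (fun i : ℕ => rot k (-j) s (i : ZMod (2*k+1))) (2*k)
    have h2 := card_reflect (fun i : ℕ => rot k (-j) s (i : ZMod (2*k+1))) _ (2*k)
      (rot_aleph_update k s j) hbal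
    rw [hbal, Nat.sub_self] at h1
    exact h1.trans h2.symm
end
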